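/- The limit distribution function F of the Calkin–Wilf tree takes the values F(1) = 1/2, F(√2) = 3/5, and F((1+√5)/2) = 2/3. -/

import Mathlib

open Filter

/-- The generations of the Calkin–Wilf tree: `CW 0 = [1/1]` is the first
generation, and each generation is obtained from the previous one by replacing
each entry `x` by `x/(x+1)` and `x+1`, in this order.  Thus the `n`-th
generation of the paper is `CW (n-1)`. -/
def CW : ℕ → List ℚ
  | 0 => [1]
  | n + 1 => (CW n).flatMap (fun x => [x / (x + 1), x + 1])

open scoped Classical in
/-- `Fcw n` is the distribution function of the `(n+1)`-st generation of the
Calkin–Wilf tree: `Fcw (n-1) x = F_n(x) = 2^(1-n) · #{j : x_j^(n) ≤ x}`. -/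
noncomputable def Fcw (n : ℕ) (x : ℝ) : ℝ :=
  ((CW n).countP (fun q => decide ((q : ℝ) ≤ x))) / 2 ^ n

/-!
Since every left child `q / (q + 1)` is less than `1` and every right child `q + 1` exceeds `1`,
the distribution functions satisfy `F_{n+1}(x + 1) = 1/2 + F_n(x) / 2` for `x ≥ 0` and
`F_{n+1}(x / (x + 1)) = F_n(x) / 2` for `x > -1`. The recursion halves the distance between
consecutive `F_n`, so they converge, and the limit satisfies the same equations. The maps
`x ↦ x + 1` and `x ↦ x / (x + 1)` lead from `0` to `1` and, composed suitably, fix `√2` and `φ`;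
each value is thus the solution of a linear equation.
-/

open scoped goldenRatio

theorem countP_flatMap_pair {α β : Type*} (f g : α → β) (p : β → Bool) (l : List α) :
    (l.flatMap fun a => [f a, g a]).countP p =
      l.countP (fun a => p (f a)) + l.countP (fun a => p (g a)) := by
  induction l with
  | nil => rfl
  | cons a l ih =>
    simp only [List.flatMap_cons, List.countP_append, List.countP_cons, List.countP_nil, ih]
    omega

theorem pos_of_mem_CW {n : ℕ} {q : ℚ} (hq : q ∈ CW n) : 0 < q := by
  induction n generalizing q with
  | zero => simp_all [CW]
  | succ n ih =>
    simp only [CW, List.mem_flatMap, List.mem_cons, List.not_mem_nil, or_false] at hq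
    obtain ⟨parent, h_parent, rfl | rfl⟩ := hq <;>
    · have := ih h_parent
      positivity

theorem length_CW (n : ℕ) : (CW n).length = 2 ^ n := by
  induction n with
  | zero => rfl
  | succ n ih => simp [CW, List.length_flatMap, ih, pow_succ]

-- The cast to `ℝ` inside `Fcw` elaborates to a monadic lift of the whole list `CW n`.
open scoped Classical in
theorem Fcw_eq_countP (n : ℕ) (x : ℝ) :
    Fcw n x = ((CW n).countP fun q : ℚ => decide ((q : ℝ) ≤ x) : ℕ) / 2 ^ n := by
  simp only [Fcw, List.bind_eq_flatMap, List.pure_def, ← List.map_eq_flatMap, List.countP_map,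
    Function.comp_def]

theorem Fcw_mem_Icc (n : ℕ) (x : ℝ) : Fcw n x ∈ Set.Icc (0 : ℝ) 1 := by
  rw [Fcw_eq_countP]
  refine ⟨by positivity, div_le_one_of_le₀ ?_ (by positivity)⟩
  exact_mod_cast List.countP_le_length.trans_eq (length_CW n)

theorem Fcw_succ_add_one (n : ℕ) {x : ℝ} (hx : 0 ≤ x) :
    Fcw (n + 1) (x + 1) = 1 / 2 + Fcw n x / 2 := by
  classical
  have h_left : (CW n).countP (fun q : ℚ => decide (((q / (q + 1) : ℚ) : ℝ) ≤ x + 1)) = 2 ^ n := by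
    rw [← length_CW n, List.countP_eq_length]
    intro q hq
    have hq_pos : (0 : ℝ) < q := by exact_mod_cast pos_of_mem_CW hq
    have : (q : ℝ) / (q + 1) ≤ 1 := div_le_one_of_le₀ (by linarith) (by linarith)
    push_cast
    exact decide_eq_true (by linarith)
  have h_right : (CW n).countP (fun q : ℚ => decide (((q + 1 : ℚ) : ℝ) ≤ x + 1)) =
      (CW n).countP (fun q : ℚ => decide ((q : ℝ) ≤ x)) := by
    simp only [Rat.cast_add, Rat.cast_one, add_le_add_iff_right]
  rw [Fcw_eq_countP, Fcw_eq_countP, CW, countP_flatMap_pair, h_left, h_right]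
  push_cast
  field_simp
  ring

theorem div_add_one_le_div_add_one_iff {a b : ℝ} (ha : -1 < a) (hb : -1 < b) :
    a / (a + 1) ≤ b / (b + 1) ↔ a ≤ b := by
  rw [div_le_div_iff₀ (by linarith) (by linarith)]
  constructor <;> intro h <;> linarith

theorem Fcw_succ_div_add_one (n : ℕ) {x : ℝ} (hx : -1 < x) :
    Fcw (n + 1) (x / (x + 1)) = Fcw n x / 2 := by
  classical
  have h_left : (CW n).countP (fun q : ℚ => decide (((q / (q + 1) : ℚ) : ℝ) ≤ x / (x + 1))) =
      (CW n).countP (fun q : ℚ => decide ((q : ℝ) ≤ x)) := by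
    refine List.countP_congr fun q hq => ?_
    have hq_pos : (0 : ℝ) < q := by exact_mod_cast pos_of_mem_CW hq
    push_cast
    simp only [decide_eq_true_eq]
    exact div_add_one_le_div_add_one_iff (by linarith) hx
  have h_right : (CW n).countP (fun q : ℚ => decide (((q + 1 : ℚ) : ℝ) ≤ x / (x + 1))) = 0 := by
    rw [List.countP_eq_zero]
    intro q hq
    have hq_pos : (0 : ℝ) < q := by exact_mod_cast pos_of_mem_CW hq
    have : x / (x + 1) < 1 := (div_lt_one (by linarith)).2 (by linarith)
    push_cast
    simp only [decide_eq_true_eq, not_le]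
    linarith
  rw [Fcw_eq_countP, Fcw_eq_countP, CW, countP_flatMap_pair, h_left, h_right, add_zero, pow_succ,
    div_div]

theorem exists_div_add_one_eq {x : ℝ} (hx : x < 1) : ∃ y, -1 < y ∧ y / (y + 1) = x := by
  have h_pos : 0 < 1 - x := by linarith
  refine ⟨x / (1 - x), (lt_div_iff₀ h_pos).2 (by linarith), ?_⟩
  field_simp
  ring

theorem dist_Fcw_succ_le (n : ℕ) (x : ℝ) : dist (Fcw n x) (Fcw (n + 1) x) ≤ (1 / 2) ^ n := by
  induction n generalizing x with
  | zero =>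
    simpa only [pow_zero] using
      Real.dist_le_of_mem_Icc_01 (Fcw_mem_Icc 0 x) (Fcw_mem_Icc 1 x)
  | succ n ih =>
    have h_half : ∃ y,
        dist (Fcw (n + 1) x) (Fcw (n + 2) x) = dist (Fcw n y) (Fcw (n + 1) y) / 2 := by
      obtain hx | hx := lt_or_ge x 1
      · obtain ⟨y, hy, rfl⟩ := exists_div_add_one_eq hx
        refine ⟨y, ?_⟩
        rw [Fcw_succ_div_add_one _ hy, Fcw_succ_div_add_one _ hy, Real.dist_eq, Real.dist_eq,
          ← sub_div, abs_div, abs_two]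
      · obtain ⟨y, rfl⟩ : ∃ y, x = y + 1 := ⟨x - 1, by ring⟩
        have hy : 0 ≤ y := by linarith
        refine ⟨y, ?_⟩
        rw [Fcw_succ_add_one _ hy, Fcw_succ_add_one _ hy, dist_add_left, Real.dist_eq, Real.dist_eq,
          ← sub_div, abs_div, abs_two]
    obtain ⟨y, hy⟩ := h_half
    rw [hy, pow_succ]
    linarith [ih y]

/-- The limit distribution function `F` of the Calkin–Wilf tree, on the whole real line; the limit
exists by `tendsto_Fcw`. -/
noncomputable def calkinWilfLimit (x : ℝ) : ℝ :=
  limUnder atTop fun n => Fcw n x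

theorem tendsto_Fcw (x : ℝ) :
    Tendsto (fun n => Fcw n x) atTop (nhds (calkinWilfLimit x)) := by
  refine (cauchySeq_of_le_geometric (1 / 2) 1 one_half_lt_one fun n => ?_).tendsto_limUnder
  simpa only [one_mul] using dist_Fcw_succ_le n x

theorem calkinWilfLimit_add_one {x : ℝ} (hx : 0 ≤ x) :
    calkinWilfLimit (x + 1) = 1 / 2 + calkinWilfLimit x / 2 := by
  have h_shift := (tendsto_add_atTop_iff_nat 1).2 (tendsto_Fcw (x + 1))
  simp only [Fcw_succ_add_one _ hx] at h_shift
  exact tendsto_nhds_unique h_shift (((tendsto_Fcw x).div_const 2).const_add _)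

theorem calkinWilfLimit_div_add_one {x : ℝ} (hx : -1 < x) :
    calkinWilfLimit (x / (x + 1)) = calkinWilfLimit x / 2 := by
  have h_shift := (tendsto_add_atTop_iff_nat 1).2 (tendsto_Fcw (x / (x + 1)))
  simp only [Fcw_succ_div_add_one _ hx] at h_shift
  exact tendsto_nhds_unique h_shift ((tendsto_Fcw x).div_const 2)

theorem calkinWilfLimit_zero : calkinWilfLimit 0 = 0 := by
  have h := calkinWilfLimit_div_add_one (x := 0) (by norm_num)
  rw [zero_div] at h
  linarith

theorem calkinWilfLimit_one : calkinWilfLimit 1 = 1 / 2 := by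
  simpa [calkinWilfLimit_zero] using calkinWilfLimit_add_one le_rfl

theorem calkinWilfLimit_sqrt_two : calkinWilfLimit √2 = 3 / 5 := by
  have h_sq : √2 * √2 = 2 := Real.mul_self_sqrt zero_le_two
  have h_one_lt : 1 < √2 := Real.one_lt_sqrt_two
  have h_outer : √2 = √2 / 2 / (√2 / 2 + 1) + 1 := by
    field_simp
    linarith
  have h_inner : √2 / 2 = (√2 + 1) / (√2 + 1 + 1) := by
    field_simp
    linarith
  have h_value : calkinWilfLimit √2 = 1 / 2 + (1 / 2 + calkinWilfLimit √2 / 2) / 2 / 2 / 2 :=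
    calc calkinWilfLimit √2
      _ = calkinWilfLimit (√2 / 2 / (√2 / 2 + 1) + 1) := congrArg _ h_outer
      _ = 1 / 2 + calkinWilfLimit (√2 / 2) / 2 / 2 := by
        rw [calkinWilfLimit_add_one (by positivity), calkinWilfLimit_div_add_one (by linarith)]
      _ = 1 / 2 + (1 / 2 + calkinWilfLimit √2 / 2) / 2 / 2 / 2 := by
        rw [h_inner, calkinWilfLimit_div_add_one (by linarith),
          calkinWilfLimit_add_one (by linarith)]
  linarith

theorem calkinWilfLimit_goldenRatio : calkinWilfLimit φ = 2 / 3 := by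
  have h_pos : 0 < φ := Real.goldenRatio_pos
  have h_fixed : φ = φ / (φ + 1) + 1 := by
    rw [← sub_eq_iff_eq_add, eq_div_iff (by linarith)]
    linarith [Real.goldenRatio_sq]
  have h_value : calkinWilfLimit φ = 1 / 2 + calkinWilfLimit φ / 2 / 2 :=
    calc calkinWilfLimit φ
      _ = calkinWilfLimit (φ / (φ + 1) + 1) := congrArg _ h_fixed
      _ = 1 / 2 + calkinWilfLimit φ / 2 / 2 := by
        rw [calkinWilfLimit_add_one (by positivity), calkinWilfLimit_div_add_one (by linarith)]
  linarith

theorem calkin_wilf_limit_distribution_special_values_general :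
    Tendsto (fun n => Fcw n 1) atTop (nhds (1 / 2)) ∧
      Tendsto (fun n => Fcw n √2) atTop (nhds (3 / 5)) ∧
      Tendsto (fun n => Fcw n φ) atTop (nhds (2 / 3)) :=
  ⟨calkinWilfLimit_one ▸ tendsto_Fcw 1, calkinWilfLimit_sqrt_two ▸ tendsto_Fcw √2,
    calkinWilfLimit_goldenRatio ▸ tendsto_Fcw φ⟩

/-- The limit distribution function `F` of the Calkin–Wilf tree takes the
values `F(1) = 1/2`, `F(√2) = 3/5`, and `F((1+√5)/2) = 2/3`. -/
theorem calkin_wilf_limit_distribution_special_values (F : ℝ → ℝ)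
    (hF : ∀ x : ℝ, 0 ≤ x → Tendsto (fun n => Fcw n x) atTop (nhds (F x))) :
    F 1 = 1 / 2 ∧ F (Real.sqrt 2) = 3 / 5 ∧ F ((1 + Real.sqrt 5) / 2) = 2 / 3 := by
  obtain ⟨h_one, h_sqrt, h_golden⟩ := calkin_wilf_limit_distribution_special_values_general
  exact ⟨tendsto_nhds_unique (hF _ zero_le_one) h_one,
    tendsto_nhds_unique (hF _ (Real.sqrt_nonneg 2)) h_sqrt,
    tendsto_nhds_unique (hF _ Real.goldenRatio_pos.le) h_golden⟩
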